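/- For all x₀, x₁ ∈ U with |x₁ − x₀| < δ, one has |t⁻(x₁) − t⁻(x₀)| ≤ (1 + 2/k)·|t⁺(x₁) − t⁺(x₀)| + 2·(1 + 2/k)·|x₁ − x₀|. -/

import Mathlib

/-!
Since `t⁺(x)` and `t⁻(x)` are unit vectors whose difference is a nonzero multiple `λ(x) x` of the
unit vector `x`, they are mirror images in the hyperplane orthogonal to `x`; in particular
`λ(x) = 2 x·t⁺(x)` (`coeff_eq_two_inner`). Hence `λ` is controlled by `t⁺` and `x`:
`|λ(x₁) − λ(x₀)| ≤ 2|x₁ − x₀| + 2|t⁺(x₁) − t⁺(x₀)|` and `|λ| ≤ 2`. Writing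
`t⁻(x₁) − t⁻(x₀) = (t⁺(x₁) − t⁺(x₀)) − (λ(x₁) − λ(x₀)) x₁ − λ(x₀) (x₁ − x₀)` gives the bound
`3|t⁺(x₁) − t⁺(x₀)| + 4|x₁ − x₀|`, which suffices because `k ≤ 1` forces `1 + 2/k ≥ 3`.
-/

open scoped RealInnerProductSpace

theorem coeff_eq_two_inner {E : Type*} [NormedAddCommGroup E] [InnerProductSpace ℝ E]
    {x p m : E} {l : ℝ} (hx : ‖x‖ = 1) (hp : ‖p‖ = 1) (hm : ‖m‖ = 1) (hl : 0 < l)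
    (h : p - m = l • x) : l = 2 * ⟪x, p⟫ := by
  have hm' : m = p - l • x := by rw [← h]; abel
  have h2 := norm_sub_sq_real p (l • x)
  rw [← hm', hm, hp, norm_smul, hx, inner_smul_right, real_inner_comm, Real.norm_eq_abs, mul_one,
    sq_abs] at h2
  have h3 : l * (l - 2 * ⟪x, p⟫) = 0 := by linarith
  rcases mul_eq_zero.mp h3 with h4 | h4 <;> linarith

/-- Let `U ⊆ Sⁿ`, `k ∈ (0,1]`, and `t⁺, t⁻ : U → Sⁿ` with
`t⁺(x) − t⁻(x) = λ(x)x`, `λ(x) > 0`, and `x·t⁻(x) ≤ −k` on `U`. Fix `ε ∈ (0, k/2)` and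
`δ ∈ (0,1)` such that `|x₁ − x₀| < δ` implies `|t⁻(x₁) − t⁻(x₀)| < ε` on `U`. Then for all
`x₀, x₁ ∈ U` with `|x₁ − x₀| < δ`,
`|t⁻(x₁) − t⁻(x₀)| ≤ (1 + 2/k)|t⁺(x₁) − t⁺(x₀)| + 2(1 + 2/k)|x₁ − x₀|`. -/
theorem tMinus_estimate (n : ℕ)
    (U : Set (EuclideanSpace ℝ (Fin (n + 1))))
    (hU : U ⊆ Metric.sphere (0 : EuclideanSpace ℝ (Fin (n + 1))) 1)
    (k : ℝ) (hk0 : 0 < k) (hk1 : k ≤ 1)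
    (tp tm : EuclideanSpace ℝ (Fin (n + 1)) → EuclideanSpace ℝ (Fin (n + 1)))
    (htp : ∀ x ∈ U, tp x ∈ Metric.sphere (0 : EuclideanSpace ℝ (Fin (n + 1))) 1)
    (htm : ∀ x ∈ U, tm x ∈ Metric.sphere (0 : EuclideanSpace ℝ (Fin (n + 1))) 1)
    (hsplit : ∀ x ∈ U, ∃ l : ℝ, 0 < l ∧ tp x - tm x = l • x)
    (hdot : ∀ x ∈ U, ⟪x, tm x⟫ ≤ -k)
    (ε δ : ℝ) (hε0 : 0 < ε) (hεk : ε < k / 2) (hδ0 : 0 < δ) (hδ1 : δ < 1)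
    (hmod : ∀ x₀ ∈ U, ∀ x₁ ∈ U, ‖x₁ - x₀‖ < δ → ‖tm x₁ - tm x₀‖ < ε) :
    ∀ x₀ ∈ U, ∀ x₁ ∈ U, ‖x₁ - x₀‖ < δ →
      ‖tm x₁ - tm x₀‖ ≤
        (1 + 2 / k) * ‖tp x₁ - tp x₀‖ + 2 * (1 + 2 / k) * ‖x₁ - x₀‖ := by
  intro x₀ h₀ x₁ h₁ _
  have nx₀ : ‖x₀‖ = 1 := by simpa using hU h₀
  have nx₁ : ‖x₁‖ = 1 := by simpa using hU h₁
  have np₀ : ‖tp x₀‖ = 1 := by simpa using htp x₀ h₀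
  have np₁ : ‖tp x₁‖ = 1 := by simpa using htp x₁ h₁
  have nm₀ : ‖tm x₀‖ = 1 := by simpa using htm x₀ h₀
  have nm₁ : ‖tm x₁‖ = 1 := by simpa using htm x₁ h₁
  obtain ⟨l₀, hl₀, e₀⟩ := hsplit x₀ h₀
  obtain ⟨l₁, hl₁, e₁⟩ := hsplit x₁ h₁
  have c₀ := coeff_eq_two_inner nx₀ np₀ nm₀ hl₀ e₀
  have c₁ := coeff_eq_two_inner nx₁ np₁ nm₁ hl₁ e₁
  have b₀ : |l₀| ≤ 2 := by
    have h := real_inner_le_norm x₀ (tp x₀)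
    rw [nx₀, np₀] at h
    rw [abs_of_pos hl₀]
    linarith
  have b₁ : |l₁ - l₀| ≤ 2 * ‖x₁ - x₀‖ + 2 * ‖tp x₁ - tp x₀‖ := by
    have hd : l₁ - l₀ = 2 * (⟪x₁ - x₀, tp x₁⟫ + ⟪x₀, tp x₁ - tp x₀⟫) := by
      rw [c₀, c₁, inner_sub_left, inner_sub_right]
      ring
    have i₁ := abs_real_inner_le_norm (x₁ - x₀) (tp x₁)
    have i₂ := abs_real_inner_le_norm x₀ (tp x₁ - tp x₀)
    rw [np₁, mul_one] at i₁
    rw [nx₀, one_mul] at i₂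
    rw [hd, abs_mul, abs_two]
    linarith [abs_add_le ⟪x₁ - x₀, tp x₁⟫ ⟪x₀, tp x₁ - tp x₀⟫]
  have key : tm x₁ - tm x₀ = (tp x₁ - tp x₀) - (l₁ - l₀) • x₁ - l₀ • (x₁ - x₀) := by
    have e₁' : tm x₁ = tp x₁ - l₁ • x₁ := by rw [← e₁]; abel
    rw [e₁']
    have e₀' : tm x₀ = tp x₀ - l₀ • x₀ := by rw [← e₀]; abel
    rw [e₀']
    module
  have n₁ : ‖(l₁ - l₀) • x₁‖ = |l₁ - l₀| := by rw [norm_smul, nx₁, mul_one, Real.norm_eq_abs]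
  have n₂ : ‖l₀ • (x₁ - x₀)‖ ≤ 2 * ‖x₁ - x₀‖ := by
    rw [norm_smul, Real.norm_eq_abs]
    exact mul_le_mul_of_nonneg_right b₀ (norm_nonneg _)
  have t₁ := norm_sub_le ((tp x₁ - tp x₀) - (l₁ - l₀) • x₁) (l₀ • (x₁ - x₀))
  have t₂ := norm_sub_le (tp x₁ - tp x₀) ((l₁ - l₀) • x₁)
  rw [← key] at t₁
  have hk : 2 ≤ 2 / k := by
    rw [le_div_iff₀ hk0]
    linarith
  have m₁ := mul_le_mul_of_nonneg_right hk (norm_nonneg (tp x₁ - tp x₀))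
  have m₂ := mul_le_mul_of_nonneg_right hk (norm_nonneg (x₁ - x₀))
  linarith [norm_nonneg (x₁ - x₀)]
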